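/- Let S = {S_1,…,S_K} ⊂ ℂ^{d×d}, let P = (p_{ij}) ∈ ℝ^{K×K} be an irreducible stochastic (transition probability) matrix with stationary distribution p = (p_1,…,p_K) satisfying p_k > 0 for all k, and let μ_{p,P} be the associated canonical (p,P)-Markov measure on Σ_K^+. If μ_{p,P} is extremal for S, then S has the spectral finiteness property: there exist n ≥ 1 and a word (i_1,…,i_n) with ρ(S) = ρ(S_{i_1}⋯S_{i_n})^{1/n}. -/

import Mathlib

open Filter MeasureTheory Topology
open scoped ENNReal

noncomputable section

/-- The one-sided shift on `Σ_K^+ = ℕ → Fin K`. -/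
def shift (K : ℕ) : (ℕ → Fin K) → ℕ → Fin K := fun i n => i (n + 1)

/-- The ordered product `S_{w 0} ⋯ S_{w (n-1)}` along a finite word `w`. -/
def finWordProd {d K : ℕ} (S : Fin K → Matrix (Fin d) (Fin d) ℂ) {n : ℕ}
    (w : Fin n → Fin K) : Matrix (Fin d) (Fin d) ℂ :=
  (List.ofFn fun t => S (w t)).prod

/-- The ordered product of the first `n` matrices along an infinite sequence. -/
def wordProd {d K : ℕ} (S : Fin K → Matrix (Fin d) (Fin d) ℂ)
    (i : ℕ → Fin K) (n : ℕ) : Matrix (Fin d) (Fin d) ℂ :=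
  (List.ofFn fun t : Fin n => S (i t)).prod

/-- The (usual) spectral radius of a complex matrix, as a real number. -/
def specRad {d : ℕ} (A : Matrix (Fin d) (Fin d) ℂ) : ℝ :=
  (spectralRadius ℂ A).toReal

/-- The generalized spectral radius of a finite family of matrices. -/
def genSpecRad {d K : ℕ} (S : Fin K → Matrix (Fin d) (Fin d) ℂ) : ℝ :=
  Filter.atTop.limsup fun n : ℕ =>
    ⨆ w : Fin n → Fin K, specRad (finWordProd S w) ^ ((n : ℝ)⁻¹)

/-- A submultiplicative matrix norm on `d × d` complex matrices. -/
structure MatrixNorm (d : ℕ) where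
  N : Matrix (Fin d) (Fin d) ℂ → ℝ
  nonneg : ∀ A, 0 ≤ N A
  definite : ∀ A, N A = 0 ↔ A = 0
  homog : ∀ (c : ℂ) (A), N (c • A) = ‖c‖ * N A
  triangle : ∀ A B, N (A + B) ≤ N A + N B
  submult : ∀ A B, N (A * B) ≤ N A * N B

/-- `μ` is extremal for `S` (w.r.t. the matrix norm `N`). -/
def IsExtremal {d K : ℕ} (S : Fin K → Matrix (Fin d) (Fin d) ℂ)
    (N : Matrix (Fin d) (Fin d) ℂ → ℝ) (μ : Measure (ℕ → Fin K)) : Prop :=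
  ∀ᵐ i ∂μ, Tendsto (fun n : ℕ => N (wordProd S i n) ^ ((n : ℝ)⁻¹))
    atTop (𝓝 (genSpecRad S))

/-- `x` is a density point of `μ`. -/
def DensityPoint {K : ℕ} (μ : Measure (ℕ → Fin K)) (x : ℕ → Fin K) : Prop :=
  ∀ U : Set (ℕ → Fin K), IsOpen U → x ∈ U → 0 < μ U

/-- `S` has the spectral finiteness property. -/
def HasFinitenessProperty {d K : ℕ} (S : Fin K → Matrix (Fin d) (Fin d) ℂ) : Prop :=
  ∃ n : ℕ, 1 ≤ n ∧ ∃ w : Fin n → Fin K,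
    genSpecRad S = specRad (finWordProd S w) ^ ((n : ℝ)⁻¹)

/-- `x` is periodic of period `π ≥ 1`. -/
def IsPeriodic {K : ℕ} (x : ℕ → Fin K) (π : ℕ) : Prop :=
  1 ≤ π ∧ ∀ n, x (n + π) = x n

/-- The cylinder set determined by a finite word. -/
def cyl {K : ℕ} {n : ℕ} (w : Fin n → Fin K) : Set (ℕ → Fin K) :=
  {i | ∀ t : Fin n, i t = w t}

/-! By pigeonhole a Markov measure has a periodic point `x` in its support; let `m` be its period.
If the spectral radius of the word of `x` were less than `ρ(S) ^ m`, normalize so that `ρ(S) = 1`.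
On an irreducible representation, Burnside's theorem turns the bound on spectral radii, through
traces, into boundedness of the semigroup, hence into an invariant norm; gluing such norms along a
composition series gives, for every `c > 1`, a norm which no letter expands by more than `c`, while
a fixed power of the word contracts it by a definite factor. A sequence along which the products
grow at the full rate therefore visits the cylinder of that power with frequency zero, so by shift
invariance this cylinder is a null set, although it is a neighbourhood of `x`. -/

section SpectralRadius

open Module (End)

theorem norm_le_of_mem_spectrum {𝕜 A : Type*} [NormedField 𝕜] [Ring A] [Algebra 𝕜 A] {a : A}
    {r : ℝ} (hr : 0 ≤ r) (ha : spectralRadius 𝕜 a ≤ ENNReal.ofReal r) {z : 𝕜}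
    (hz : z ∈ spectrum 𝕜 a) : ‖z‖ ≤ r := by
  have h : ‖z‖ₑ ≤ ENNReal.ofReal r := (iSup₂_le_iff.1 ha) z hz
  rwa [← ofReal_norm, ENNReal.ofReal_le_ofReal_iff hr] at h

theorem spectralRadius_smul {𝕜 A : Type*} [NormedField 𝕜] [Ring A] [Algebra 𝕜 A] {c : 𝕜}
    (hc : c ≠ 0) (a : A) : spectralRadius 𝕜 (c • a) = ‖c‖ₑ * spectralRadius 𝕜 a := by
  have h : spectrum 𝕜 (c • a) = (c • ·) '' spectrum 𝕜 a :=
    spectrum.unit_smul_eq_smul a (Units.mk0 c hc)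
  simp only [spectralRadius, h, iSup_image, ← enorm_eq_nnnorm, smul_eq_mul, enorm_mul,
    ENNReal.mul_iSup]

theorem spectralRadius_algEquiv {𝕜 A B : Type*} [NormedField 𝕜] [Ring A] [Algebra 𝕜 A] [Ring B]
    [Algebra 𝕜 B] (e : A ≃ₐ[𝕜] B) (a : A) : spectralRadius 𝕜 (e a) = spectralRadius 𝕜 a := by
  rw [spectralRadius, spectralRadius, AlgEquiv.spectrum_eq]

theorem tendsto_pow_nhds_zero_of_spectralRadius_lt_one {A : Type*} [NormedRing A]
    [NormedAlgebra ℂ A] [CompleteSpace A] {a : A} (ha : spectralRadius ℂ a < 1) :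
    Tendsto (fun n : ℕ => a ^ n) atTop (𝓝 0) := by
  obtain ⟨r, har, hr⟩ := ENNReal.lt_iff_exists_nnreal_btwn.1 ha
  have hle : ∀ᶠ n : ℕ in atTop, ‖a ^ n‖ ≤ (r : ℝ) ^ n := by
    filter_upwards [eventually_ge_atTop 1,
      (spectrum.pow_nnnorm_pow_one_div_tendsto_nhds_spectralRadius a).eventually_lt_const har]
      with n hn hlt
    rw [one_div, ENNReal.rpow_inv_lt_iff (by positivity), ENNReal.rpow_natCast] at hlt
    exact_mod_cast hlt.le
  exact squeeze_zero_norm' hle (tendsto_pow_atTop_nhds_zero_of_lt_one r.2 (by exact_mod_cast hr))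

variable {𝕜 V : Type*} [NormedField 𝕜] [AddCommGroup V] [Module 𝕜 V] {f : End 𝕜 V}

theorem spectralRadius_restrict_le {W : Submodule 𝕜 V} [FiniteDimensional 𝕜 W]
    (hW : ∀ x ∈ W, f x ∈ W) : spectralRadius 𝕜 (f.restrict hW) ≤ spectralRadius 𝕜 f := by
  refine iSup_le_iSup_of_subset fun z hz => ?_
  obtain ⟨w, hw⟩ := (End.hasEigenvalue_iff_mem_spectrum.2 hz).exists_hasEigenvector
  have hfw : f w = z • (w : V) := congrArg Subtype.val hw.apply_eq_smul
  exact (End.hasEigenvalue_of_hasEigenvector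
    ⟨End.mem_eigenspace_iff.2 hfw, fun h => hw.2 (Subtype.ext h)⟩).mem_spectrum

theorem spectralRadius_mapQ_le {W : Submodule 𝕜 V} [FiniteDimensional 𝕜 (V ⧸ W)]
    (hW : W ≤ W.comap f) :
    spectralRadius 𝕜 (W.mapQ W f hW : End 𝕜 (V ⧸ W)) ≤ spectralRadius 𝕜 f := by
  refine iSup_le_iSup_of_subset fun z hz hu => hz ?_
  have hsurj : Function.Surjective
      (algebraMap 𝕜 (End 𝕜 (V ⧸ W)) z - W.mapQ W f hW : End 𝕜 (V ⧸ W)) := fun y => by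
    obtain ⟨x, rfl⟩ := W.mkQ_surjective y
    obtain ⟨v, rfl⟩ := ((End.isUnit_iff _).1 (spectrum.mem_resolventSet_iff.1 hu)).2 x
    exact ⟨W.mkQ v, by simp⟩
  exact (End.isUnit_iff _).2 ⟨LinearMap.injective_iff_surjective.2 hsurj, hsurj⟩

theorem norm_trace_le_of_spectralRadius_le [IsAlgClosed 𝕜] [FiniteDimensional 𝕜 V] {r : ℝ}
    (hr : 0 ≤ r) (hf : spectralRadius 𝕜 f ≤ ENNReal.ofReal r) :
    ‖LinearMap.trace 𝕜 V f‖ ≤ Module.finrank 𝕜 V * r := by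
  have hroot : ∀ z ∈ f.charpoly.roots, ‖z‖ ≤ r := fun z hz =>
    norm_le_of_mem_spectrum hr hf <| End.hasEigenvalue_iff_mem_spectrum.1 <|
      (End.hasEigenvalue_iff_isRoot_charpoly f z).2 (Polynomial.isRoot_of_mem_roots hz)
  rw [End.trace_eq_sum_roots_charpoly_of_splits (IsAlgClosed.splits _)]
  calc ‖f.charpoly.roots.sum‖ ≤ (f.charpoly.roots.map (‖·‖)).sum := norm_multiset_sum_le _
    _ ≤ (f.charpoly.roots.map (‖·‖)).card • r :=
        Multiset.sum_le_card_nsmul _ _ (Multiset.forall_mem_map_iff.2 hroot)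
    _ ≤ Module.finrank 𝕜 V * r := by
        rw [Multiset.card_map, nsmul_eq_mul, ← LinearMap.charpoly_natDegree f]
        gcongr
        exact Polynomial.card_roots' _

end SpectralRadius

/-- A seminorm is a norm if it vanishes only at the origin. The norms below are constructed rather
than given, so they are carried as seminorms and not as `NormedAddCommGroup` instances. -/
def IsNorm {𝕜 V : Type*} [NormedField 𝕜] [AddCommGroup V] [Module 𝕜 V] (N : Seminorm 𝕜 V) :
    Prop :=
  ∀ x, N x = 0 → x = 0

namespace IsNorm

theorem normedSpaceCore {𝕜 V : Type*} [NormedField 𝕜] [AddCommGroup V] [Module 𝕜 V]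
    {N : Seminorm 𝕜 V} (hN : IsNorm N) :
    let : Norm V := ⟨N⟩
    NormedSpace.Core 𝕜 V :=
  let : Norm V := ⟨N⟩
  { norm_nonneg := apply_nonneg N
    norm_smul := map_smul_eq_mul N
    norm_triangle := map_add_le_add N
    norm_eq_zero_iff := fun x => ⟨hN x, fun h => h ▸ map_zero N⟩ }

variable {V : Type*} [AddCommGroup V] [Module ℂ V] [FiniteDimensional ℂ V] {N : Seminorm ℂ V}

theorem exists_le_mul (hN : IsNorm N) (q : Seminorm ℂ V) : ∃ C > 0, ∀ x, q x ≤ C * N x := by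
  let : Norm V := ⟨N⟩
  let := NormedAddCommGroup.ofCore hN.normedSpaceCore
  let := NormedSpace.ofCore hN.normedSpaceCore
  have := FiniteDimensional.complexToReal V
  have hq : Continuous q := continuousOn_univ.1 (q.convexOn.continuousOn isOpen_univ)
  exact q.bound_of_continuous_normedSpace hq

theorem exists_forall_apply_le_mul (hN : IsNorm N) (q : Seminorm ℂ (Module.End ℂ V)) :
    ∃ C > 0, ∀ f r, 0 ≤ r → (∀ x, N (f x) ≤ r * N x) → q f ≤ C * r := by
  let : Norm V := ⟨N⟩
  let := NormedAddCommGroup.ofCore hN.normedSpaceCore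
  let := NormedSpace.ofCore hN.normedSpaceCore
  let φ := Module.End.toContinuousLinearMap (𝕜 := ℂ) V
  have hnorm : IsNorm (normSeminorm ℂ (V →L[ℂ] V)) := fun g hg => norm_eq_zero.1 hg
  have := φ.toLinearEquiv.finiteDimensional
  obtain ⟨C, hC₀, hC⟩ := hnorm.exists_le_mul (q.comp φ.symm.toLinearMap)
  refine ⟨C, hC₀, fun f r hr hf => ?_⟩
  calc q f = q (φ.symm (φ f)) := by rw [φ.symm_apply_apply]
    _ ≤ C * ‖φ f‖ := hC (φ f)
    _ ≤ C * r := by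
        gcongr
        exact (φ f).opNorm_le_bound hr hf

theorem eventually_pow_apply_le (hN : IsNorm N) {f : Module.End ℂ V}
    (hf : spectralRadius ℂ f < 1) {r : ℝ} (hr : 0 < r) :
    ∀ᶠ k in atTop, ∀ x, N ((f ^ k) x) ≤ r * N x := by
  let : Norm V := ⟨N⟩
  let := NormedAddCommGroup.ofCore hN.normedSpaceCore
  let := NormedSpace.ofCore hN.normedSpaceCore
  have := FiniteDimensional.complete ℂ V
  let φ := Module.End.toContinuousLinearMap (𝕜 := ℂ) V
  have hφ : spectralRadius ℂ (φ f) < 1 := by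
    rwa [spectralRadius_algEquiv]
  filter_upwards [(tendsto_pow_nhds_zero_of_spectralRadius_lt_one hφ).norm.eventually_lt_const
    (norm_zero.trans_lt hr)] with k hk x
  rw [← map_pow] at hk
  exact (φ (f ^ k)).le_of_opNorm_le hk.le x

end IsNorm

section Burnside

open Module (End)

variable {k : Type*} [Field k] [IsAlgClosed k]

theorem lsmul_surjective_of_isSimpleModule {A V : Type*} [Ring A] [Algebra k A]
    [AddCommGroup V] [Module k V] [Module A V] [IsScalarTower k A V] [FiniteDimensional k V]
    [IsSimpleModule A V] : Function.Surjective (Algebra.lsmul k k V : A →ₐ[k] End k V) := by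
  intro f
  let F : End (End A V) V :=
    { toFun := f
      map_add' := map_add f
      map_smul' := fun g x => by
        obtain ⟨c, rfl⟩ := (IsSimpleModule.algebraMap_end_bijective_of_isAlgClosed k).2 g
        simp }
  let b := Module.finBasis k V
  classical
  obtain ⟨a, ha⟩ := jacobson_density F (Finset.univ.image b)
  exact ⟨a, b.ext fun i => (ha (b i) (by simp)).symm⟩

variable {M V : Type*} [Monoid M] [AddCommGroup V] [Module k V] [FiniteDimensional k V]

theorem asAlgebraHom_surjective_of_isIrreducible (ρ : Representation k M V) [ρ.IsIrreducible] :
    Function.Surjective ρ.asAlgebraHom :=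
  have h := lsmul_surjective_of_isSimpleModule (k := k) (A := MonoidAlgebra k M) (V := ρ.asModule)
  h

theorem span_range_eq_top_of_isIrreducible (ρ : Representation k M V) [ρ.IsIrreducible] :
    Submodule.span k (Set.range ρ) = ⊤ := by
  refine Submodule.eq_top_iff'.2 fun f => ?_
  obtain ⟨a, rfl⟩ := asAlgebraHom_surjective_of_isIrreducible ρ f
  induction a using MonoidAlgebra.induction_linear with
  | zero => rw [map_zero]; exact Submodule.zero_mem _
  | add a b ha hb => rw [map_add]; exact Submodule.add_mem _ ha hb
  | single g c =>
    rw [ρ.asAlgebraHom_single]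
    exact Submodule.smul_mem _ _ (Submodule.subset_span ⟨g, rfl⟩)

end Burnside

theorem exists_subrepresentation_ne_bot_ne_top {k M V : Type*} [Field k] [Monoid M]
    [AddCommGroup V] [Module k V] [Nontrivial V] {ρ : Representation k M V}
    (hρ : ¬ρ.IsIrreducible) :
    ∃ σ : Subrepresentation ρ, σ.toSubmodule ≠ ⊥ ∧ σ.toSubmodule ≠ ⊤ := by
  by_contra! h
  have : Nontrivial (Subrepresentation ρ) := ⟨⊥, ⊤, fun h' =>
    bot_ne_top (α := Submodule k V) (congrArg Subrepresentation.toSubmodule h')⟩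
  refine hρ ⟨fun σ => ?_⟩
  by_cases hσ : σ.toSubmodule = ⊥
  · exact .inl (Subrepresentation.toSubmodule_injective hσ)
  · exact .inr (Subrepresentation.toSubmodule_injective (h σ hσ))

section ExtremalNorm

open Module (End Dual)

variable {M V : Type*} [Monoid M] [AddCommGroup V] [Module ℂ V] [FiniteDimensional ℂ V]
  {ρ : Representation ℂ M V}

theorem exists_forall_norm_trace_mul_le [ρ.IsIrreducible]
    (hρ : ∀ g, spectralRadius ℂ (ρ g) ≤ 1) (B : End ℂ V) :
    ∃ C, ∀ g, ‖LinearMap.trace ℂ V (ρ g * B)‖ ≤ C := by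
  have hB : B ∈ Submodule.span ℂ (Set.range ρ) := by
    rw [span_range_eq_top_of_isIrreducible ρ]
    exact Submodule.mem_top
  induction hB using Submodule.span_induction with
  | mem _ h =>
    obtain ⟨g', rfl⟩ := h
    refine ⟨Module.finrank ℂ V * 1, fun g => ?_⟩
    rw [← map_mul]
    exact norm_trace_le_of_spectralRadius_le zero_le_one (by simpa using hρ (g * g'))
  | zero => exact ⟨0, by simp⟩
  | add B B' _ _ h h' =>
    obtain ⟨C, hC⟩ := h
    obtain ⟨C', hC'⟩ := h'
    refine ⟨C + C', fun g => ?_⟩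
    rw [mul_add, map_add]
    exact norm_add_le_of_le (hC g) (hC' g)
  | smul c B _ h =>
    obtain ⟨C, hC⟩ := h
    refine ⟨‖c‖ * C, fun g => ?_⟩
    rw [mul_smul_comm, map_smul, norm_smul]
    gcongr
    exact hC g

theorem exists_forall_norm_dual_apply_le [ρ.IsIrreducible]
    (hρ : ∀ g, spectralRadius ℂ (ρ g) ≤ 1) (φ : Dual ℂ V) (x : V) :
    ∃ C, ∀ g, ‖φ (ρ g x)‖ ≤ C := by
  obtain ⟨C, hC⟩ := exists_forall_norm_trace_mul_le hρ (φ.smulRight x)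
  refine ⟨C, fun g => ?_⟩
  have hmul : ρ g * φ.smulRight x = φ.smulRight (ρ g x) := by ext; simp
  simpa only [hmul, LinearMap.trace_smulRight] using hC g

theorem exists_isNorm_forall_apply_le [ρ.IsIrreducible]
    (hρ : ∀ g, spectralRadius ℂ (ρ g) ≤ 1) :
    ∃ N : Seminorm ℂ V, IsNorm N ∧ ∀ g x, N (ρ g x) ≤ N x := by
  let b := Module.finBasis ℂ V
  let N₀ : Seminorm ℂ V := (normSeminorm ℂ _).comp b.equivFun.toLinearMap
  have hbdd : ∀ x, BddAbove (Set.range fun g => N₀.comp (ρ g) x) := fun x => by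
    choose C hC using fun i => exists_forall_norm_dual_apply_le hρ (b.coord i) x
    refine ⟨‖C‖, Set.forall_mem_range.2 fun g => ?_⟩
    exact (pi_norm_le_iff_of_nonneg (norm_nonneg C)).2 fun i =>
      (hC i g).trans ((le_abs_self _).trans (norm_le_pi_norm C i))
  have hN : ∀ x, (⨆ g, N₀.comp (ρ g)) x = ⨆ g, N₀ (ρ g x) := fun x =>
    Seminorm.iSup_apply (Seminorm.bddAbove_range_iff.2 hbdd)
  refine ⟨⨆ g, N₀.comp (ρ g), fun x hx => ?_, fun g x => ?_⟩
  · have h₀ : N₀ x ≤ 0 := by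
      simpa [← hN, hx] using le_ciSup (hbdd x) 1
    simpa [N₀] using h₀
  · rw [hN, hN]
    exact ciSup_le fun g' => by simpa using le_ciSup (hbdd x) (g' * g)

end ExtremalNorm

section Gluing

open Module (End)

variable {V : Type*} [AddCommGroup V] [Module ℂ V] {W : Submodule ℂ V}

/-- The seminorm on `V` assembled from seminorms on a subspace and on its quotient by means of a
projection `r` onto the subspace; the weight `L` of the quotient part absorbs the failure of a
linear map preserving `W` to commute with `r`. -/
def gluedSeminorm (N₁ : Seminorm ℂ W) (N₂ : Seminorm ℂ (V ⧸ W)) (r : V →ₗ[ℂ] W) (L : NNReal) :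
    Seminorm ℂ V :=
  N₁.comp r + L • N₂.comp W.mkQ

variable {N₁ : Seminorm ℂ W} {N₂ : Seminorm ℂ (V ⧸ W)} {r : V →ₗ[ℂ] W}

theorem gluedSeminorm_apply (L : NNReal) (x : V) :
    gluedSeminorm N₁ N₂ r L x = N₁ (r x) + L * N₂ (W.mkQ x) :=
  rfl

theorem IsNorm.glued (h₁ : IsNorm N₁) (h₂ : IsNorm N₂) (hr : r ∘ₗ W.subtype = LinearMap.id)
    {L : NNReal} (hL : 0 < L) : IsNorm (gluedSeminorm N₁ N₂ r L) := by
  intro x hx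
  rw [gluedSeminorm_apply, add_eq_zero_iff_of_nonneg (apply_nonneg _ _) (by positivity),
    mul_eq_zero_iff_left (by positivity)] at hx
  have hxW : x ∈ W := (Submodule.Quotient.mk_eq_zero W).1 (h₂ _ hx.2)
  have hrx : r x = ⟨x, hxW⟩ := LinearMap.congr_fun hr ⟨x, hxW⟩
  exact congrArg Subtype.val (hrx.symm.trans (h₁ _ hx.1))

theorem eventually_gluedSeminorm_apply_le [FiniteDimensional ℂ (V ⧸ W)] (hN₂ : IsNorm N₂)
    (hr : r ∘ₗ W.subtype = LinearMap.id) {f : End ℂ V} (hf : W ≤ W.comap f) {c c' : ℝ}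
    (hc : c < c') (h₁ : ∀ w, N₁ (f.restrict hf w) ≤ c * N₁ w)
    (h₂ : ∀ y, N₂ (W.mapQ W f hf y) ≤ c * N₂ y) :
    ∀ᶠ L in atTop, ∀ x, gluedSeminorm N₁ N₂ r L (f x) ≤ c' * gluedSeminorm N₁ N₂ r L x := by
  let e : V →ₗ[ℂ] W := r ∘ₗ f - f.restrict hf ∘ₗ r
  have he : W ≤ LinearMap.ker e := fun w hw => by
    have hrf : r (f w) = f.restrict hf ⟨w, hw⟩ := LinearMap.congr_fun hr (f.restrict hf ⟨w, hw⟩)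
    have hrw : r w = ⟨w, hw⟩ := LinearMap.congr_fun hr ⟨w, hw⟩
    rw [LinearMap.mem_ker, LinearMap.sub_apply, LinearMap.comp_apply, LinearMap.comp_apply, hrf,
      hrw, sub_self]
  obtain ⟨C, -, hC⟩ := hN₂.exists_le_mul (N₁.comp (W.liftQ e he))
  filter_upwards [NNReal.tendsto_coe_atTop.2 tendsto_id |>.eventually_ge_atTop (C / (c' - c))]
    with L hL x
  rw [div_le_iff₀ (sub_pos.2 hc)] at hL
  have hrf : N₁ (r (f x)) ≤ c * N₁ (r x) + C * N₂ (W.mkQ x) :=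
    calc N₁ (r (f x)) = N₁ (f.restrict hf (r x) + e x) := by simp [e]
      _ ≤ N₁ (f.restrict hf (r x)) + N₁ (e x) := map_add_le_add _ _ _
      _ ≤ c * N₁ (r x) + C * N₂ (W.mkQ x) := add_le_add (h₁ _) (hC (W.mkQ x))
  have hQf : N₂ (W.mkQ (f x)) ≤ c * N₂ (W.mkQ x) := h₂ (W.mkQ x)
  have := apply_nonneg N₁ (r x)
  have := apply_nonneg N₂ (W.mkQ x)
  rw [gluedSeminorm_apply, gluedSeminorm_apply]
  calc N₁ (r (f x)) + L * N₂ (W.mkQ (f x))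
      ≤ c * N₁ (r x) + C * N₂ (W.mkQ x) + L * (c * N₂ (W.mkQ x)) := by gcongr
    _ ≤ c' * N₁ (r x) + L * (c' - c) * N₂ (W.mkQ x) + L * (c * N₂ (W.mkQ x)) := by gcongr; exact hL
    _ = c' * (N₁ (r x) + L * N₂ (W.mkQ x)) := by ring

end Gluing

section AdaptedNorm

variable {M V : Type*} [Monoid M] [AddCommGroup V] [Module ℂ V]

/-- The representation `ρ` admits a norm for which the elements of `F` expand vectors by at most a
factor `c`, while `a` contracts them by `q` up to the same loss `c`. -/
def HasAdaptedNorm (ρ : Representation ℂ M V) (F : Set M) (a : M) (q c : ℝ) : Prop :=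
  ∃ N : Seminorm ℂ V, IsNorm N ∧ (∀ g ∈ F, ∀ x, N (ρ g x) ≤ c * N x) ∧
    ∀ x, N (ρ a x) ≤ c * q * N x

theorem hasAdaptedNorm_of_subsingleton [Subsingleton V] (ρ : Representation ℂ M V) (F : Set M)
    (a : M) (q c : ℝ) : HasAdaptedNorm ρ F a q c :=
  ⟨0, fun x _ => Subsingleton.elim x 0, by simp, by simp⟩

variable [FiniteDimensional ℂ V] {ρ : Representation ℂ M V} {F : Set M} {a : M} {q : ℝ}

theorem eventually_hasAdaptedNorm_of_isIrreducible [ρ.IsIrreducible]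
    (hρ : ∀ g, spectralRadius ℂ (ρ g) ≤ 1) (ha : spectralRadius ℂ (ρ a) < 1) (hq : 0 < q) :
    ∀ᶠ k : ℕ in atTop, ∀ c > 1, HasAdaptedNorm ρ F (a ^ k) q c := by
  obtain ⟨N, hN, hρN⟩ := exists_isNorm_forall_apply_le hρ
  filter_upwards [hN.eventually_pow_apply_le ha hq] with k hk c hc
  refine ⟨N, hN, fun g _ x => (hρN g x).trans ?_, fun x => ?_⟩
  · exact le_mul_of_one_le_left (apply_nonneg N x) hc.le
  · rw [map_pow]
    refine (hk x).trans ?_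
    gcongr
    exact le_mul_of_one_le_left hq.le hc.le

theorem HasAdaptedNorm.of_subrepresentation_of_quotient {W : Submodule ℂ V}
    (hW : ∀ g, W ≤ W.comap (ρ g)) (hF : F.Finite) (hq : 0 < q) {c c' : ℝ} (hc : c < c')
    (hsub : HasAdaptedNorm (ρ.subrepresentation W hW) F a q c)
    (hquot : HasAdaptedNorm (ρ.quotient W hW) F a q c) : HasAdaptedNorm ρ F a q c' := by
  obtain ⟨r, hr⟩ := W.subtype.exists_leftInverse_of_injective W.ker_subtype
  obtain ⟨N₁, hN₁, hF₁, ha₁⟩ := hsub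
  obtain ⟨N₂, hN₂, hF₂, ha₂⟩ := hquot
  have hglueF := (Filter.eventually_all_finite hF).2 fun g hg =>
    eventually_gluedSeminorm_apply_le hN₂ hr (hW g) hc (hF₁ g hg) (hF₂ g hg)
  have hgluea := eventually_gluedSeminorm_apply_le hN₂ hr (hW a)
    (mul_lt_mul_of_pos_right hc hq) ha₁ ha₂
  obtain ⟨L, hLF, hLa, hL⟩ := (hglueF.and (hgluea.and (eventually_gt_atTop 0))).exists
  exact ⟨gluedSeminorm N₁ N₂ r L, hN₁.glued hN₂ hr hL, hLF, hLa⟩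

theorem eventually_hasAdaptedNorm (hρ : ∀ g, spectralRadius ℂ (ρ g) ≤ 1)
    (ha : spectralRadius ℂ (ρ a) < 1) (hF : F.Finite) (hq : 0 < q) :
    ∀ᶠ k : ℕ in atTop, ∀ c > 1, HasAdaptedNorm ρ F (a ^ k) q c := by
  induction hn : Module.finrank ℂ V using Nat.strong_induction_on generalizing V with
  | _ n ih =>
  rcases subsingleton_or_nontrivial V with hV | hV
  · exact .of_forall fun k c _ => hasAdaptedNorm_of_subsingleton ρ F (a ^ k) q c
  by_cases hirr : ρ.IsIrreducible
  · exact eventually_hasAdaptedNorm_of_isIrreducible hρ ha hq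
  obtain ⟨σ, hbot, htop⟩ := exists_subrepresentation_ne_bot_ne_top hirr
  set W := σ.toSubmodule
  have hdW := Submodule.finrank_lt htop
  have hdQ : Module.finrank ℂ (V ⧸ W) < Module.finrank ℂ V := by
    have := Submodule.finrank_quotient_add_finrank W
    have := Submodule.one_le_finrank_iff.2 hbot
    omega
  have hW : ∀ g, W ≤ W.comap (ρ g) := fun g => σ.apply_mem_toSubmodule g
  have hρW : ∀ g, spectralRadius ℂ (ρ.subrepresentation W hW g) ≤ spectralRadius ℂ (ρ g) :=
    fun g => spectralRadius_restrict_le (hW g)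
  have hρQ : ∀ g, spectralRadius ℂ (ρ.quotient W hW g) ≤ spectralRadius ℂ (ρ g) :=
    fun g => spectralRadius_mapQ_le (hW g)
  filter_upwards [ih _ (hn ▸ hdW) (fun g => (hρW g).trans (hρ g)) ((hρW a).trans_lt ha) rfl,
    ih _ (hn ▸ hdQ) (fun g => (hρQ g).trans (hρ g)) ((hρQ a).trans_lt ha) rfl]
    with k hsub hquot c hc
  obtain ⟨c₁, hc₁, hcc⟩ := exists_between hc
  exact .of_subrepresentation_of_quotient hW hF hq hcc (hsub c₁ hc₁) (hquot c₁ hc₁)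

end AdaptedNorm

theorem freeMonoid_lift_smul {k A α : Type*} [CommSemiring k] [Semiring A] [Algebra k A]
    (c : k) (f : α → A) (w : FreeMonoid α) :
    FreeMonoid.lift (c • f) w = c ^ w.length • FreeMonoid.lift f w := by
  induction w using FreeMonoid.inductionOn' with
  | one => simp
  | of_mul a w ih => simp [ih, smul_smul, pow_add, mul_comm]

theorem freeMonoid_length_pow {α : Type*} (w : FreeMonoid α) (n : ℕ) :
    (w ^ n).length = n * w.length := by
  induction n with
  | zero => simp
  | succ n ih => rw [pow_succ, FreeMonoid.length_mul, ih, add_one_mul]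

section GenSpecRad

variable {d K : ℕ}

section

attribute [local instance] Matrix.linftyOpNormedRing Matrix.linftyOpNormedAlgebra

theorem spectralRadius_le_nnnorm (B : Matrix (Fin d) (Fin d) ℂ) : spectralRadius ℂ B ≤ ‖B‖₊ := by
  rcases isEmpty_or_nonempty (Fin d) with h | h
  · rw [spectrum.SpectralRadius.of_subsingleton]
    exact bot_le
  · have := Matrix.linfty_opNormOneClass (n := Fin d) (α := ℂ)
    have : CompleteSpace (Matrix (Fin d) (Fin d) ℂ) := FiniteDimensional.complete ℂ _
    exact spectrum.spectralRadius_le_nnnorm B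

theorem spectralRadius_ne_top (B : Matrix (Fin d) (Fin d) ℂ) : spectralRadius ℂ B ≠ ⊤ :=
  ne_top_of_le_ne_top ENNReal.coe_ne_top (spectralRadius_le_nnnorm B)

theorem specRad_nonneg (B : Matrix (Fin d) (Fin d) ℂ) : 0 ≤ specRad B := ENNReal.toReal_nonneg

theorem specRad_le_norm (B : Matrix (Fin d) (Fin d) ℂ) : specRad B ≤ ‖B‖ :=
  ENNReal.toReal_mono ENNReal.coe_ne_top (spectralRadius_le_nnnorm B)

theorem specRad_one_le : specRad (1 : Matrix (Fin d) (Fin d) ℂ) ≤ 1 := by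
  rcases isEmpty_or_nonempty (Fin d) with h | h
  · rw [specRad, spectrum.SpectralRadius.of_subsingleton]
    exact zero_le_one
  · rw [specRad, spectrum.spectralRadius_one, ENNReal.toReal_one]

theorem specRad_pow_le (B : Matrix (Fin d) (Fin d) ℂ) {n : ℕ} (hn : n ≠ 0) :
    specRad B ^ n ≤ specRad (B ^ n) := by
  rw [specRad, ← ENNReal.toReal_pow]
  exact ENNReal.toReal_mono (spectralRadius_ne_top _) (spectrum.spectralRadius_pow_le B n hn)

variable (S : Fin K → Matrix (Fin d) (Fin d) ℂ)

theorem finWordProd_get (w : FreeMonoid (Fin K)) :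
    finWordProd S w.toList.get = FreeMonoid.lift S w := by
  rw [FreeMonoid.lift_apply, ← List.ofFn_get (w.toList), List.map_ofFn, List.ofFn_get]
  rfl

theorem exists_forall_specRad_finWordProd_rpow_le :
    ∃ R : ℝ, ∀ (n : ℕ) (w : Fin n → Fin K), specRad (finWordProd S w) ^ ((n : ℝ)⁻¹) ≤ R := by
  obtain ⟨R, hR⟩ := (Set.finite_range fun a => ‖S a‖).bddAbove
  refine ⟨max R 1, fun n w => ?_⟩
  rcases eq_or_ne n 0 with rfl | hn
  · simp
  have hprod : specRad (finWordProd S w) ≤ max R 1 ^ n :=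
    calc specRad (finWordProd S w) ≤ ‖(List.ofFn (S ∘ w)).prod‖ := specRad_le_norm _
      _ ≤ ((List.ofFn (S ∘ w)).map (‖·‖)).prod := List.norm_prod_le' (by simpa using hn)
      _ = ∏ t, ‖S (w t)‖ := by rw [List.map_ofFn, List.prod_ofFn]; rfl
      _ ≤ ∏ _t : Fin n, max R 1 := Finset.prod_le_prod (fun _ _ => norm_nonneg _) fun t _ =>
          (hR ⟨w t, rfl⟩).trans (le_max_left R 1)
      _ = max R 1 ^ n := by simp
  exact (Real.rpow_inv_le_iff_of_pos (specRad_nonneg _) (by positivity) (by positivity)).2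
    (by rwa [Real.rpow_natCast])

end

variable (S : Fin K → Matrix (Fin d) (Fin d) ℂ)

theorem specRad_lift_rpow_le_genSpecRad {w : FreeMonoid (Fin K)} (hw : w ≠ 1) :
    specRad (FreeMonoid.lift S w) ^ ((w.length : ℝ)⁻¹) ≤ genSpecRad S := by
  obtain ⟨R, hR⟩ := exists_forall_specRad_finWordProd_rpow_le S
  have hlen : 0 < w.length := Nat.pos_of_ne_zero (mt FreeMonoid.length_eq_zero.1 hw)
  have : Nonempty (Fin K) := ⟨w.toList.get ⟨0, hlen⟩⟩
  refine le_limsup_of_frequently_le (frequently_atTop.2 fun m => ?_)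
    (isBoundedUnder_of ⟨R, fun n => ciSup_le (hR n)⟩)
  have hpow : (w ^ (m + 1)).length = (m + 1) * w.length := freeMonoid_length_pow w (m + 1)
  refine ⟨(w ^ (m + 1)).length, ?_, ?_⟩
  · rw [hpow]
    exact m.le_succ.trans (Nat.le_mul_of_pos_right _ hlen)
  calc specRad (FreeMonoid.lift S w) ^ ((w.length : ℝ)⁻¹)
      = (specRad (FreeMonoid.lift S w) ^ (m + 1)) ^ (((w ^ (m + 1)).length : ℝ)⁻¹) := by
        rw [hpow, Nat.cast_mul, mul_inv, Real.rpow_mul (pow_nonneg (specRad_nonneg _) _),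
          Real.pow_rpow_inv_natCast (specRad_nonneg _) m.succ_ne_zero]
    _ ≤ specRad (FreeMonoid.lift S (w ^ (m + 1))) ^ (((w ^ (m + 1)).length : ℝ)⁻¹) := by
        rw [map_pow]
        gcongr
        exacts [pow_nonneg (specRad_nonneg _) _, specRad_pow_le _ m.succ_ne_zero]
    _ ≤ ⨆ v : Fin (w ^ (m + 1)).length → Fin K,
          specRad (finWordProd S v) ^ (((w ^ (m + 1)).length : ℝ)⁻¹) := by
        rw [← finWordProd_get]
        exact le_ciSup (f := fun v : Fin (w ^ (m + 1)).length → Fin K =>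
          specRad (finWordProd S v) ^ (((w ^ (m + 1)).length : ℝ)⁻¹))
          ⟨R, Set.forall_mem_range.2 (hR _)⟩ (w ^ (m + 1)).toList.get

theorem specRad_lift_le (w : FreeMonoid (Fin K)) :
    specRad (FreeMonoid.lift S w) ≤ genSpecRad S ^ w.length := by
  rcases eq_or_ne w 1 with rfl | hw
  · simpa using specRad_one_le
  have hlen : w.length ≠ 0 := mt FreeMonoid.length_eq_zero.1 hw
  have hnn := specRad_nonneg (FreeMonoid.lift S w)
  rw [← Real.rpow_inv_natCast_pow hnn hlen]
  exact pow_le_pow_left₀ (Real.rpow_nonneg hnn _) (specRad_lift_rpow_le_genSpecRad S hw) _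

theorem genSpecRad_nonneg [Nonempty (Fin K)] : 0 ≤ genSpecRad S := by
  simpa using (specRad_nonneg _).trans (specRad_lift_le S (.of (Classical.arbitrary _)))

/-- The representation of the free monoid on the letters by words in `S`, scaled so that its
elements have spectral radius at most one; it is meaningful only for `genSpecRad S ≠ 0`, because
of the inverse. -/
def normalizedRep : Representation ℂ (FreeMonoid (Fin K)) (Fin d → ℂ) :=
  (Matrix.toLinAlgEquiv' : _ ≃ₐ[ℂ] Module.End ℂ (Fin d → ℂ)).toRingEquiv.toMonoidHom.comp
    (FreeMonoid.lift (((genSpecRad S : ℂ)⁻¹) • S))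

theorem normalizedRep_apply (w : FreeMonoid (Fin K)) : normalizedRep S w =
    Matrix.toLinAlgEquiv' (((genSpecRad S : ℂ)⁻¹) ^ w.length • FreeMonoid.lift S w) :=
  congrArg Matrix.toLinAlgEquiv' (freeMonoid_lift_smul _ S w)

variable {S}

theorem spectralRadius_normalizedRep (hS : 0 < genSpecRad S) (w : FreeMonoid (Fin K)) :
    spectralRadius ℂ (normalizedRep S w) =
      ENNReal.ofReal (specRad (FreeMonoid.lift S w) / genSpecRad S ^ w.length) := by
  have hc : ((genSpecRad S : ℂ)⁻¹) ^ w.length ≠ 0 :=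
    pow_ne_zero _ (inv_ne_zero (Complex.ofReal_ne_zero.2 hS.ne'))
  rw [normalizedRep_apply, spectralRadius_algEquiv, spectralRadius_smul hc, div_eq_inv_mul,
    ENNReal.ofReal_mul (by positivity), specRad, ENNReal.ofReal_toReal (spectralRadius_ne_top _),
    ← ofReal_norm, norm_pow, norm_inv, Complex.norm_real, Real.norm_of_nonneg hS.le, inv_pow]

theorem spectralRadius_normalizedRep_le_one (hS : 0 < genSpecRad S) (w : FreeMonoid (Fin K)) :
    spectralRadius ℂ (normalizedRep S w) ≤ 1 := by
  rw [spectralRadius_normalizedRep hS, ENNReal.ofReal_le_one, div_le_one (by positivity)]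
  exact specRad_lift_le S w

theorem spectralRadius_normalizedRep_lt_one (hS : 0 < genSpecRad S) {w : FreeMonoid (Fin K)}
    (hw : specRad (FreeMonoid.lift S w) < genSpecRad S ^ w.length) :
    spectralRadius ℂ (normalizedRep S w) < 1 := by
  rwa [spectralRadius_normalizedRep hS, ENNReal.ofReal_lt_one, div_lt_one (by positivity)]

end GenSpecRad

section Birkhoff

variable {α : Type*}

theorem birkhoffSum_const_sub (T : α → α) (r : ℝ) (g : α → ℝ) (n : ℕ) (x : α) :
    birkhoffSum T (fun x => r - g x) n x = n * (r - birkhoffAverage ℝ T g n x) := by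
  rcases eq_or_ne n 0 with rfl | hn
  · simp
  · have hn' : (n : ℝ) ≠ 0 := Nat.cast_ne_zero.2 hn
    rw [birkhoffAverage, smul_eq_mul, mul_sub, mul_inv_cancel_left₀ hn']
    simp [birkhoffSum, Finset.sum_sub_distrib]

theorem birkhoffAverage_indicator_mem_Icc (T : α → α) (E : Set α) (n : ℕ) (x : α) :
    birkhoffAverage ℝ T (E.indicator 1) n x ∈ Set.Icc (0 : ℝ) 1 := by
  have hE : ∀ y, E.indicator 1 y ∈ Set.Icc (0 : ℝ) 1 := fun y =>
    ⟨Set.indicator_nonneg (fun _ _ => zero_le_one) y, Set.indicator_le_self' (by simp) y⟩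
  have hsum : birkhoffSum T (E.indicator (1 : α → ℝ)) n x ≤ n := by
    simpa [birkhoffSum] using
      Finset.sum_le_card_nsmul (Finset.range n) _ 1 fun k _ => (hE (T^[k] x)).2
  rw [birkhoffAverage, smul_eq_mul, inv_mul_eq_div]
  exact ⟨div_nonneg (Finset.sum_nonneg fun k _ => (hE _).1) n.cast_nonneg,
    div_le_one_of_le₀ hsum n.cast_nonneg⟩

variable [MeasurableSpace α] {μ : Measure α} {T : α → α}

theorem integral_birkhoffAverage {E : Type*} [NormedAddCommGroup E] [NormedSpace ℝ E]
    (hT : MeasurePreserving T μ μ) {g : α → E} (hg : Integrable g μ) {n : ℕ} (hn : n ≠ 0) :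
    ∫ x, birkhoffAverage ℝ T g n x ∂μ = ∫ x, g x ∂μ := by
  have hint : ∀ k, Integrable (fun x => g (T^[k] x)) μ := fun k =>
    (hT.iterate k).integrable_comp_of_integrable hg
  have hk : ∀ k, ∫ x, g (T^[k] x) ∂μ = ∫ x, g x ∂μ := fun k => by
    rw [← integral_map (hT.iterate k).aemeasurable, (hT.iterate k).map_eq]
    rw [(hT.iterate k).map_eq]
    exact hg.aestronglyMeasurable
  simp only [birkhoffAverage, birkhoffSum]
  rw [integral_smul, integral_finsetSum _ fun k _ => hint k]
  simp only [hk, Finset.sum_const, Finset.card_range]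
  rw [← Nat.cast_smul_eq_nsmul ℝ, inv_smul_smul₀ (Nat.cast_ne_zero.2 hn)]

theorem measure_eq_zero_of_tendsto_birkhoffAverage [IsFiniteMeasure μ]
    (hT : MeasurePreserving T μ μ) {E : Set α} (hE : MeasurableSet E)
    (h : ∀ᵐ x ∂μ, Tendsto (fun n => birkhoffAverage ℝ T (E.indicator 1) n x) atTop (𝓝 (0 : ℝ))) :
    μ E = 0 := by
  have hmeas : ∀ n, Measurable (birkhoffAverage ℝ T (E.indicator (1 : α → ℝ)) n) := fun n =>
    Measurable.const_smul (Finset.measurable_fun_sum (Finset.range n) fun k _ =>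
      (measurable_one.indicator hE).comp (hT.iterate k).measurable) (n : ℝ)⁻¹
  have hlim := tendsto_integral_of_dominated_convergence (fun _ => (1 : ℝ))
    (fun n => (hmeas n).aestronglyMeasurable) (integrable_const 1)
    (fun n => .of_forall fun x => by
      obtain ⟨h₀, h₁⟩ := birkhoffAverage_indicator_mem_Icc T E n x
      rwa [Real.norm_of_nonneg h₀]) h
  rw [integral_zero] at hlim
  have hconst : Tendsto (fun _ : ℕ => μ.real E) atTop (𝓝 0) := by
    refine hlim.congr' ?_
    filter_upwards [eventually_ne_atTop 0] with n hn
    rw [integral_birkhoffAverage hT ((integrable_const 1).indicator hE) hn]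
    exact integral_indicator_one hE
  exact (measureReal_eq_zero_iff (μ := μ)).1 (tendsto_nhds_unique tendsto_const_nhds hconst)

end Birkhoff

section PrefixWord

variable {K : ℕ}

theorem shift_iterate_apply (m : ℕ) (i : ℕ → Fin K) (n : ℕ) : (shift K)^[m] i n = i (m + n) := by
  induction m generalizing i with
  | zero => rw [Function.iterate_zero_apply, zero_add]
  | succ m ih => rw [Function.iterate_succ_apply, ih, shift, Nat.add_right_comm]

/-- The word formed by the first `n` letters of a sequence, as an element of the free monoid. -/
def prefixWord (i : ℕ → Fin K) (n : ℕ) : FreeMonoid (Fin K) :=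
  FreeMonoid.ofList (List.ofFn fun t : Fin n => i t)

theorem length_prefixWord (i : ℕ → Fin K) (n : ℕ) : (prefixWord i n).length = n :=
  List.length_ofFn

theorem prefixWord_add (i : ℕ → Fin K) (m n : ℕ) :
    prefixWord i (m + n) = prefixWord i m * prefixWord ((shift K)^[m] i) n := by
  simp only [prefixWord, List.ofFn_add, FreeMonoid.ofList_append, shift_iterate_apply,
    Fin.val_castLE, Fin.val_natAdd]

theorem prefixWord_mul_of_isPeriodic {x : ℕ → Fin K} {m : ℕ} (hx : IsPeriodic x m) (k : ℕ) :
    prefixWord x (m * k) = prefixWord x m ^ k := by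
  have hshift : (shift K)^[m] x = x := funext fun n => by
    rw [shift_iterate_apply, add_comm, hx.2]
  induction k with
  | zero => rfl
  | succ k ih => rw [mul_add_one, add_comm, prefixWord_add, hshift, ih, pow_succ']

theorem prefixWord_eq_of_mem_cylinder {x i : ℕ → Fin K} {n : ℕ} (hi : i ∈ PiNat.cylinder x n) :
    prefixWord i n = prefixWord x n :=
  congrArg (fun w => FreeMonoid.ofList (List.ofFn w)) (funext fun t : Fin n => hi t t.2)

theorem lift_prefixWord {d : ℕ} (S : Fin K → Matrix (Fin d) (Fin d) ℂ) (i : ℕ → Fin K) (n : ℕ) :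
    FreeMonoid.lift S (prefixWord i n) = wordProd S i n := by
  rw [FreeMonoid.lift_apply, prefixWord, FreeMonoid.toList_ofList, List.map_ofFn]
  rfl

end PrefixWord

section Cocycle

variable {V : Type*} [AddCommGroup V] [Module ℂ V] {N : Seminorm ℂ V}

theorem seminorm_apply_le_pow_length {α : Type*} {ρ : Representation ℂ (FreeMonoid α) V} {c : ℝ}
    (hc : 0 ≤ c) (hρ : ∀ a y, N (ρ (.of a) y) ≤ c * N y) (w : FreeMonoid α) (y : V) :
    N (ρ w y) ≤ c ^ w.length * N y := by
  induction w using FreeMonoid.inductionOn' with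
  | one => simp
  | of_mul a w ih =>
    rw [map_mul, Module.End.mul_apply, FreeMonoid.length_mul, FreeMonoid.length_of, pow_add,
      pow_one, mul_assoc]
    exact (hρ a _).trans (by gcongr)

variable {K M : ℕ} {ρ : Representation ℂ (FreeMonoid (Fin K)) V}

theorem seminorm_prefixWord_le_exp_birkhoffSum {g : (ℕ → Fin K) → ℝ}
    (hg : ∀ i y, N (ρ (prefixWord i M) y) ≤ Real.exp (g i) * N y)
    (n : ℕ) (i : ℕ → Fin K) (y : V) :
    N (ρ (prefixWord i (M * n)) y) ≤ Real.exp (birkhoffSum ((shift K)^[M]) g n i) * N y := by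
  induction n generalizing i with
  | zero => simp [prefixWord]
  | succ n ih =>
    rw [mul_add_one, add_comm, prefixWord_add, map_mul, Module.End.mul_apply, birkhoffSum_succ',
      Real.exp_add, mul_assoc]
    exact (hg i _).trans (by gcongr; exact ih _)

theorem seminorm_prefixWord_le_exp_indicator {x : ℕ → Fin K} (hM : 1 ≤ M) {ε : ℝ} (hε : 0 ≤ ε)
    (hρ : ∀ a y, N (ρ (.of a) y) ≤ Real.exp ε * N y)
    (hx : ∀ y, N (ρ (prefixWord x M) y) ≤ Real.exp ε * Real.exp (-1) * N y)
    (i : ℕ → Fin K) (y : V) :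
    N (ρ (prefixWord i M) y) ≤
      Real.exp (M * ε - (PiNat.cylinder x M).indicator 1 i) * N y := by
  by_cases hi : i ∈ PiNat.cylinder x M
  · rw [prefixWord_eq_of_mem_cylinder hi, Set.indicator_of_mem hi, Pi.one_apply]
    refine (hx y).trans ?_
    rw [← Real.exp_add, ← sub_eq_add_neg]
    gcongr
    exact le_mul_of_one_le_left hε (by exact_mod_cast hM)
  · rw [Set.indicator_of_notMem hi, sub_zero, Real.exp_nat_mul]
    simpa only [length_prefixWord] using
      seminorm_apply_le_pow_length (Real.exp_nonneg ε) hρ (prefixWord i M) y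

end Cocycle

section Frequency

variable {d K : ℕ} {S : Fin K → Matrix (Fin d) (Fin d) ℂ} {x : ℕ → Fin K} {M : ℕ}

theorem exists_forall_seminorm_wordProd_le (hS : 0 < genSpecRad S) (hM : 1 ≤ M) {ε : ℝ}
    (hε : 0 ≤ ε) (h : HasAdaptedNorm (normalizedRep S) (Set.range .of) (prefixWord x M)
      (Real.exp (-1)) (Real.exp ε)) (p : Seminorm ℂ (Matrix (Fin d) (Fin d) ℂ)) :
    ∃ C > 0, ∀ i n, p (wordProd S i (M * n)) ≤ C * genSpecRad S ^ (M * n) *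
      Real.exp (n * (M * ε -
        birkhoffAverage ℝ ((shift K)^[M]) ((PiNat.cylinder x M).indicator 1) n i)) := by
  obtain ⟨N, hN, hF, hx⟩ := h
  let e : Matrix (Fin d) (Fin d) ℂ ≃ₐ[ℂ] Module.End ℂ (Fin d → ℂ) := Matrix.toLinAlgEquiv'
  obtain ⟨C, hC₀, hC⟩ := hN.exists_forall_apply_le_mul (p.comp e.symm.toLinearMap)
  refine ⟨C, hC₀, fun i n => ?_⟩
  have hp := hC _ _ (Real.exp_nonneg _) <| seminorm_prefixWord_le_exp_birkhoffSum
    (seminorm_prefixWord_le_exp_indicator hM hε (fun a => hF _ ⟨a, rfl⟩) hx) n i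
  have hval : p.comp e.symm.toLinearMap (normalizedRep S (prefixWord i (M * n))) =
      (genSpecRad S ^ (M * n))⁻¹ * p (wordProd S i (M * n)) := by
    rw [normalizedRep_apply, length_prefixWord, lift_prefixWord]
    simp [e, map_smul_eq_mul, abs_of_pos hS]
  rwa [hval, birkhoffSum_const_sub, inv_mul_le_iff₀ (by positivity), mul_left_comm,
    ← mul_assoc] at hp

theorem eventually_pos_of_tendsto_rpow_inv {u : ℕ → ℝ} (hu : ∀ n, 0 ≤ u n) {r : ℝ} (hr : 0 < r)
    (h : Tendsto (fun n : ℕ => u n ^ ((n : ℝ)⁻¹)) atTop (𝓝 r)) : ∀ᶠ n in atTop, 0 < u n := by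
  filter_upwards [h.eventually_const_lt hr, eventually_ne_atTop 0] with n hn hn₀
  refine (hu n).lt_of_ne' fun h₀ => hn.ne' ?_
  rw [h₀, Real.zero_rpow (inv_ne_zero (Nat.cast_ne_zero.2 hn₀))]

theorem tendsto_log_div_of_tendsto_rpow_inv {u : ℕ → ℝ} (hu : ∀ n, 0 ≤ u n) {r : ℝ} (hr : 0 < r)
    (h : Tendsto (fun n : ℕ => u n ^ ((n : ℝ)⁻¹)) atTop (𝓝 r)) :
    Tendsto (fun n : ℕ => Real.log (u n) / n) atTop (𝓝 (Real.log r)) := by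
  refine (h.log hr.ne').congr' ?_
  filter_upwards [eventually_pos_of_tendsto_rpow_inv hu hr h] with n hn
  rw [Real.log_rpow hn, inv_mul_eq_div]

theorem tendsto_birkhoffAverage_cylinder (hS : 0 < genSpecRad S) (hM : 1 ≤ M)
    (hx : ∀ c > 1, HasAdaptedNorm (normalizedRep S) (Set.range .of) (prefixWord x M)
      (Real.exp (-1)) c)
    (p : Seminorm ℂ (Matrix (Fin d) (Fin d) ℂ)) {i : ℕ → Fin K}
    (hi : Tendsto (fun n : ℕ => p (wordProd S i n) ^ ((n : ℝ)⁻¹)) atTop (𝓝 (genSpecRad S))) :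
    Tendsto
      (fun n : ℕ => birkhoffAverage ℝ ((shift K)^[M]) ((PiNat.cylinder x M).indicator 1) n i)
      atTop (𝓝 (0 : ℝ)) := by
  have : (0 : ℝ) < M := by exact_mod_cast hM
  have hblocks : Tendsto (fun n : ℕ => M * n) atTop atTop := tendsto_id.const_mul_atTop' hM
  have hpnn : ∀ n, 0 ≤ p (wordProd S i n) := fun n => apply_nonneg p _
  refine tendsto_order.2 ⟨fun a ha => .of_forall fun n =>
    ha.trans_le (birkhoffAverage_indicator_mem_Icc _ _ n i).1, fun δ hδ => ?_⟩
  obtain ⟨ε, hε, hεδ⟩ : ∃ ε > 0, M * ε < δ := ⟨δ / (2 * M), by positivity, by field_simp; norm_num⟩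
  obtain ⟨C, hC₀, hC⟩ := exists_forall_seminorm_wordProd_le hS hM hε.le
    (hx _ (Real.one_lt_exp_iff.2 hε)) p
  have hlim : Tendsto (fun n : ℕ => M * ε + Real.log C / n + M * (Real.log (genSpecRad S) -
      Real.log (p (wordProd S i (M * n))) / (M * n : ℕ))) atTop (𝓝 (M * ε)) := by
    have hlog := (tendsto_log_div_of_tendsto_rpow_inv hpnn hS hi).comp hblocks
    simpa using ((tendsto_const_div_atTop_nhds_zero_nat (Real.log C)).const_add (M * ε)).add
      ((hlog.const_sub (Real.log (genSpecRad S))).const_mul (M : ℝ))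
  filter_upwards [hlim.eventually_lt_const hεδ, eventually_gt_atTop 0,
    hblocks.eventually (eventually_pos_of_tendsto_rpow_inv hpnn hS hi)] with n hn hn₀ hpos
  refine lt_of_le_of_lt ?_ hn
  have hlog := Real.log_le_log hpos (hC i n)
  rw [Real.log_mul (by positivity) (by positivity), Real.log_mul (by positivity) (by positivity),
    Real.log_exp, Real.log_pow, Nat.cast_mul] at hlog
  have hn₀' : (0 : ℝ) < n := by exact_mod_cast hn₀
  refine le_of_mul_le_mul_left ?_ hn₀'
  rw [Nat.cast_mul]
  field_simp
  linarith

end Frequency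

section Extremal

variable {d K : ℕ} {S : Fin K → Matrix (Fin d) (Fin d) ℂ} {x : ℕ → Fin K} {m : ℕ}
  {μ : Measure (ℕ → Fin K)}

theorem measure_cylinder_eq_zero_of_specRad_wordProd_lt [IsFiniteMeasure μ]
    (hμ : MeasurePreserving (shift K) μ μ) (p : Seminorm ℂ (Matrix (Fin d) (Fin d) ℂ))
    (hext : IsExtremal S p μ) (hS : 0 < genSpecRad S) (hx : IsPeriodic x m)
    (hlt : specRad (wordProd S x m) < genSpecRad S ^ m) :
    ∃ M, μ (PiNat.cylinder x M) = 0 := by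
  have hρ : spectralRadius ℂ (normalizedRep S (prefixWord x m)) < 1 :=
    spectralRadius_normalizedRep_lt_one hS (by rwa [lift_prefixWord, length_prefixWord])
  obtain ⟨k, hadapted, hk⟩ := ((eventually_hasAdaptedNorm
    (spectralRadius_normalizedRep_le_one hS) hρ (Set.finite_range .of)
    (Real.exp_pos (-1))).and (eventually_ge_atTop 1)).exists
  rw [← prefixWord_mul_of_isPeriodic hx] at hadapted
  exact ⟨m * k, measure_eq_zero_of_tendsto_birkhoffAverage (hμ.iterate (m * k))
    (PiNat.isOpen_cylinder _ x _).measurableSet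
    (hext.mono fun i => tendsto_birkhoffAverage_cylinder hS (Nat.mul_pos hx.1 hk) hadapted p)⟩

theorem specRad_wordProd_eq_of_densityPoint [IsFiniteMeasure μ]
    (hμ : MeasurePreserving (shift K) μ μ) (p : Seminorm ℂ (Matrix (Fin d) (Fin d) ℂ))
    (hext : IsExtremal S p μ) (hxμ : DensityPoint μ x) (hx : IsPeriodic x m) :
    specRad (wordProd S x m) = genSpecRad S ^ m := by
  have hle : specRad (wordProd S x m) ≤ genSpecRad S ^ m := by
    simpa only [lift_prefixWord, length_prefixWord] using specRad_lift_le S (prefixWord x m)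
  have : Nonempty (Fin K) := ⟨x 0⟩
  rcases (genSpecRad_nonneg S).eq_or_lt with hS | hS
  · rw [← hS, zero_pow (Nat.one_le_iff_ne_zero.1 hx.1)] at hle ⊢
    exact hle.antisymm (specRad_nonneg _)
  · refine hle.eq_of_not_lt fun hlt => ?_
    obtain ⟨M, hM⟩ := measure_cylinder_eq_zero_of_specRad_wordProd_lt hμ p hext hS hx hlt
    exact (hxμ _ (PiNat.isOpen_cylinder _ x M) (PiNat.self_mem_cylinder x M)).ne' hM

theorem hasFinitenessProperty_of_periodic_densityPoint [IsFiniteMeasure μ]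
    (hμ : MeasurePreserving (shift K) μ μ) (p : Seminorm ℂ (Matrix (Fin d) (Fin d) ℂ))
    (hext : IsExtremal S p μ) (hxμ : DensityPoint μ x) (hx : IsPeriodic x m) :
    HasFinitenessProperty S := by
  refine ⟨m, hx.1, fun t => x t, ?_⟩
  have : Nonempty (Fin K) := ⟨x 0⟩
  have h : specRad (finWordProd S fun t : Fin m => x t) = genSpecRad S ^ m :=
    specRad_wordProd_eq_of_densityPoint hμ p hext hxμ hx
  rw [h, Real.pow_rpow_inv_natCast (genSpecRad_nonneg S) (Nat.one_le_iff_ne_zero.1 hx.1)]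

theorem densityPoint_of_measure_cylinder_ne_zero (h : ∀ n, μ (PiNat.cylinder x n) ≠ 0) :
    DensityPoint μ x := by
  intro U hU hxU
  obtain ⟨_, ⟨y, n, rfl⟩, hxy, hyU⟩ :=
    (PiNat.isTopologicalBasis_cylinders _).exists_subset_of_mem_open hxU hU
  rw [← PiNat.mem_cylinder_iff_eq.1 hxy] at hyU
  exact (pos_iff_ne_zero.2 (h n)).trans_le (measure_mono hyU)

end Extremal

section Cylinder

variable {K : ℕ}

theorem isPiSystem_cylinder :
    IsPiSystem {s : Set (ℕ → Fin K) | ∃ x n, s = PiNat.cylinder x n} := by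
  rintro _ ⟨x, m, rfl⟩ _ ⟨y, n, rfl⟩ ⟨z, hzx, hzy⟩
  rw [← PiNat.mem_cylinder_iff_eq.1 hzx, ← PiNat.mem_cylinder_iff_eq.1 hzy]
  rcases le_total m n with h | h
  · exact ⟨z, n, Set.inter_eq_right.2 (PiNat.cylinder_anti z h)⟩
  · exact ⟨z, m, Set.inter_eq_left.2 (PiNat.cylinder_anti z h)⟩

theorem cyl_eq_cylinder (x : ℕ → Fin K) (n : ℕ) :
    cyl (fun t : Fin n => x t) = PiNat.cylinder x n :=
  Set.ext fun _ => Fin.forall_iff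

theorem measurableSet_cyl {n : ℕ} (w : Fin n → Fin K) : MeasurableSet (cyl w) := by
  simp only [cyl, Set.ofPred_forall]
  exact .iInter fun t => measurableSet_eq_fun (measurable_pi_apply _) measurable_const

theorem ext_of_cyl {μ ν : Measure (ℕ → Fin K)} [IsFiniteMeasure μ]
    (h : ∀ (n : ℕ) (w : Fin n → Fin K), μ (cyl w) = ν (cyl w)) : μ = ν := by
  have hgen := (PiNat.isTopologicalBasis_cylinders fun _ : ℕ => Fin K).borel_eq_generateFrom
  rw [← BorelSpace.measurable_eq] at hgen
  refine ext_of_generate_finite _ hgen isPiSystem_cylinder ?_ ?_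
  · rintro _ ⟨x, n, rfl⟩
    simpa only [cyl_eq_cylinder] using h n fun t => x t
  · simpa [cyl] using h 0 Fin.elim0

theorem shift_preimage_cyl {n : ℕ} (w : Fin n → Fin K) :
    shift K ⁻¹' cyl w = ⋃ a, cyl (Fin.cons a w : Fin (n + 1) → Fin K) := by
  ext i
  simp [cyl, shift, Fin.forall_fin_succ]

theorem measurable_shift : Measurable (shift K) :=
  measurable_pi_lambda _ fun n => measurable_pi_apply (n + 1)

theorem measure_shift_preimage_cyl (μ : Measure (ℕ → Fin K)) {n : ℕ} (w : Fin n → Fin K) :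
    μ (shift K ⁻¹' cyl w) = ∑ a, μ (cyl (Fin.cons a w : Fin (n + 1) → Fin K)) := by
  rw [shift_preimage_cyl, measure_iUnion _ fun a => measurableSet_cyl _, tsum_fintype]
  exact fun a b hab => Set.disjoint_left.2 fun i ha hb => hab ((ha 0).symm.trans (hb 0))

end Cylinder

section Markov

variable {K : ℕ} {P : Matrix (Fin K) (Fin K) ℝ} {p : Fin K → ℝ} {μ : Measure (ℕ → Fin K)}

/-- `μ` is the canonical `(p, P)`-Markov measure: its values on cylinders are the probabilities of
the paths of a Markov chain with initial distribution `p` and transition matrix `P`. -/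
def IsMarkovMeasure (p : Fin K → ℝ) (P : Matrix (Fin K) (Fin K) ℝ) (μ : Measure (ℕ → Fin K)) :
    Prop :=
  ∀ (n : ℕ) (w : Fin (n + 1) → Fin K),
    μ (cyl w) = ENNReal.ofReal (p (w 0) * ∏ t : Fin n, P (w t.castSucc) (w t.succ))

namespace IsMarkovMeasure

theorem measurePreserving_shift [IsFiniteMeasure μ] (hμ : IsMarkovMeasure p P μ)
    (hp : ∀ a, 0 ≤ p a) (hP : ∀ a b, 0 ≤ P a b) (hstat : ∀ b, ∑ a, p a * P a b = p b) :
    MeasurePreserving (shift K) μ μ := by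
  refine ⟨measurable_shift, (ext_of_cyl fun n w => ?_).symm⟩
  rw [Measure.map_apply measurable_shift (measurableSet_cyl w)]
  cases n with
  | zero => simp [cyl]
  | succ n =>
    have hcons : ∀ a, μ (cyl (Fin.cons a w : Fin (n + 2) → Fin K)) =
        ENNReal.ofReal (p a * P a (w 0) * ∏ t : Fin n, P (w t.castSucc) (w t.succ)) := fun a => by
      rw [hμ, Fin.prod_univ_succ, mul_assoc]
      simp only [Fin.cons_zero, Fin.cons_succ, Fin.castSucc_zero, ← Fin.succ_castSucc]
    simp only [measure_shift_preimage_cyl, hcons]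
    rw [hμ n w, ← hstat (w 0), Finset.sum_mul, ENNReal.ofReal_sum_of_nonneg]
    exact fun a _ => mul_nonneg (mul_nonneg (hp a) (hP a _)) (Finset.prod_nonneg fun t _ => hP _ _)

theorem densityPoint (hμ : IsMarkovMeasure p P μ) {x : ℕ → Fin K} (hp : 0 < p (x 0))
    (hP : ∀ n, 0 < P (x n) (x (n + 1))) : DensityPoint μ x := by
  refine densityPoint_of_measure_cylinder_ne_zero fun n => ?_
  have hpos : 0 < μ (PiNat.cylinder x (n + 1)) := by
    rw [← cyl_eq_cylinder, hμ, ENNReal.ofReal_pos]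
    exact mul_pos hp (Finset.prod_pos fun t _ => hP t)
  exact (hpos.trans_le (measure_mono (PiNat.cylinder_anti x n.le_succ))).ne'

end IsMarkovMeasure

theorem exists_isPeriodicPt_of_finite {α : Type*} [Finite α] [Nonempty α] (f : α → α) :
    ∃ m ≥ 1, ∃ a, Function.IsPeriodicPt f m a := by
  obtain ⟨s⟩ := ‹Nonempty α›
  obtain ⟨m, n, hmn, h⟩ : ∃ m n, m < n ∧ f^[m] s = f^[n] s := by
    obtain ⟨m, n, hne, h⟩ := Finite.exists_ne_map_eq_of_infinite fun n : ℕ => f^[n] s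
    rcases hne.lt_or_gt with hlt | hlt
    exacts [⟨m, n, hlt, h⟩, ⟨n, m, hlt, h.symm⟩]
  refine ⟨n - m, Nat.sub_pos_of_lt hmn, f^[m] s, ?_⟩
  rw [Function.IsPeriodicPt, Function.IsFixedPt, ← Function.iterate_add_apply,
    Nat.sub_add_cancel hmn.le, h]

theorem exists_isPeriodic_of_stationary (hp : ∀ a, 0 ≤ p a) (hpsum : ∑ a, p a = 1)
    (hP : ∀ a b, 0 ≤ P a b) (hProw : ∀ a, ∑ b, P a b = 1) (hstat : ∀ b, ∑ a, p a * P a b = p b) :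
    ∃ x m, IsPeriodic x m ∧ ∀ n, 0 < p (x n) ∧ 0 < P (x n) (x (n + 1)) := by
  have hsucc : ∀ a : {a // 0 < p a}, ∃ b : {b // 0 < p b}, 0 < P a b := fun ⟨a, ha⟩ => by
    obtain ⟨b, -, hb⟩ : ∃ b ∈ Finset.univ, 0 < P a b :=
      Finset.exists_lt_of_sum_lt (by simp [hProw])
    refine ⟨⟨b, ?_⟩, hb⟩
    calc 0 < p a * P a b := mul_pos ha hb
      _ ≤ ∑ a, p a * P a b :=
        Finset.single_le_sum (fun a _ => mul_nonneg (hp a) (hP a b)) (Finset.mem_univ a)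
      _ = p b := hstat b
  choose f hf using hsucc
  obtain ⟨a₀, -, ha₀⟩ : ∃ a ∈ Finset.univ, 0 < p a := Finset.exists_lt_of_sum_lt (by simp [hpsum])
  have : Nonempty {a // 0 < p a} := ⟨⟨a₀, ha₀⟩⟩
  obtain ⟨m, hm, a, ha⟩ := exists_isPeriodicPt_of_finite f
  refine ⟨fun n => f^[n] a, m, ⟨hm, fun n => ?_⟩, fun n => ⟨(f^[n] a).2, ?_⟩⟩
  · exact congrArg Subtype.val ((Function.iterate_add_apply f n m a).trans (congrArg f^[n] ha))
  · simpa only [Function.iterate_succ_apply'] using hf (f^[n] a)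

end Markov

theorem finiteness_of_extremal_markov_measure_general {d K : ℕ}
    (S : Fin K → Matrix (Fin d) (Fin d) ℂ) (N : Seminorm ℂ (Matrix (Fin d) (Fin d) ℂ))
    {p : Fin K → ℝ} (hp : ∀ a, 0 ≤ p a) (hpsum : ∑ a, p a = 1)
    {P : Matrix (Fin K) (Fin K) ℝ} (hP : ∀ a b, 0 ≤ P a b) (hProw : ∀ a, ∑ b, P a b = 1)
    (hstat : ∀ b, ∑ a, p a * P a b = p b) {μ : Measure (ℕ → Fin K)} [IsFiniteMeasure μ]
    (hμ : IsMarkovMeasure p P μ) (hext : IsExtremal S N μ) : HasFinitenessProperty S := by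
  obtain ⟨x, m, hx, hpos⟩ := exists_isPeriodic_of_stationary hp hpsum hP hProw hstat
  exact hasFinitenessProperty_of_periodic_densityPoint (hμ.measurePreserving_shift hp hP hstat) N
    hext (hμ.densityPoint (hpos 0).1 fun n => (hpos n).2) hx

/-- The seminorm underlying a matrix norm. -/
def MatrixNorm.toSeminorm {d : ℕ} (ν : MatrixNorm d) :
    Seminorm ℂ (Matrix (Fin d) (Fin d) ℂ) :=
  Seminorm.of ν.N ν.triangle ν.homog

/-- If the canonical `(p, P)`-Markov measure of an irreducible stochastic matrix `P` with
positive stationary distribution `p` is extremal for `S`, then `S` has the spectral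
finiteness property. -/
theorem finiteness_of_extremal_markov_measure
    {d K : ℕ} (hd : 2 ≤ d) (hK : 2 ≤ K)
    (S : Fin K → Matrix (Fin d) (Fin d) ℂ) (ν : MatrixNorm d)
    (Pm : Matrix (Fin K) (Fin K) ℝ)
    (hPnn : ∀ a b, 0 ≤ Pm a b)
    (hProw : ∀ a, ∑ b, Pm a b = 1)
    (hPirr : ∀ a b, ∃ n : ℕ, 1 ≤ n ∧ 0 < (Pm ^ n) a b)
    (p : Fin K → ℝ) (hppos : ∀ k, 0 < p k) (hpsum : ∑ k, p k = 1)
    (hstat : ∀ b, ∑ a, p a * Pm a b = p b)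
    (μ : Measure (ℕ → Fin K)) [IsProbabilityMeasure μ]
    (hcyl : ∀ (n : ℕ) (w : Fin (n + 1) → Fin K),
      μ (cyl w) = ENNReal.ofReal (p (w 0) * ∏ t : Fin n, Pm (w t.castSucc) (w t.succ)))
    (hext : IsExtremal S ν.N μ) :
    HasFinitenessProperty S :=
  finiteness_of_extremal_markov_measure_general S ν.toSeminorm (fun k => (hppos k).le) hpsum hPnn
    hProw hstat hcyl hext
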